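/- Under conditions (C1)–(C2) with γ > 0, the following Potter-type bounds hold: for every ε > 0 there exists t₀ such that for all t ≥ t₀ and all x ≥ 1, (1−ε)·x^{−ε}·K_{γ,ρ}(x) ≤ [ (U(tx) − U(t))/(t·U'(t)) − (x^γ − 1)/γ ] / A(t) ≤ (1+ε)·x^{ε}·K_{γ,ρ}(x). -/

import Mathlib

open Filter Real

noncomputable section

/-- `K_{γ,ρ}(x) = ∫₁^x u^{γ−1} (∫₁^u s^{ρ−1} ds) du`. -/
def Kfun (γ ρ x : ℝ) : ℝ :=
  ∫ u in (1:ℝ)..x, u ^ (γ - 1) * ∫ s in (1:ℝ)..u, s ^ (ρ - 1)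

/-!
Put `V(u) = u^{1-γ} U'(tu) / U'(t)`. Then `V(1) = 1` and `V'(u) = V(u) A(tu) / u`, so that
smallness of `A` gives `u^{-δ} ≤ V(u) ≤ u^δ`. Dividing the equation for `V'` by `A(t)` and
inserting Potter's bounds `A(tu) / A(t) ≈ u^ρ` (up to factors `1 ± δ` and `u^{±δ}`), which follow
from Karamata's uniform convergence theorem, one integration bounds `(V(u) - 1) / A(t)` by multiples
of `∫₁^u s^{ρ-1} ds`. Since `U(tu) / (t U'(t))` has derivative `u^{γ-1} V(u)`, a second integration
produces `K_{γ,ρ}`.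
-/

open MeasureTheory Set Topology

section UniformConvergence

variable {h : ℝ → ℝ}

theorem tendstoInMeasure_sub_of_forall_tendsto_sub (hm : Measurable h)
    (hlim : ∀ w, Tendsto (fun v => h (v + w) - h v) atTop (𝓝 0))
    (μ : Measure ℝ) [IsFiniteMeasure μ] :
    TendstoInMeasure μ (fun v w => h (v + w) - h v) atTop 0 := fun ε hε =>
  tendsto_of_seq_tendsto fun v hv =>
    tendstoInMeasure_of_tendsto_ae (f := fun n w => h (v n + w) - h (v n))
      (fun n => (by fun_prop : Measurable fun w => h (v n + w) - h (v n)).aestronglyMeasurable)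
      (ae_of_all μ fun w => (hlim w).comp hv) ε hε

/-- The shifts `w ∈ J` that move `h` away from its value at `v` by at least `η`. -/
def oscillationSet (h : ℝ → ℝ) (J : Set ℝ) (η v : ℝ) : Set ℝ :=
  {w | η ≤ |h (v + w) - h v|} ∩ J

theorem tendsto_measureReal_oscillationSet (hm : Measurable h)
    (hlim : ∀ w, Tendsto (fun v => h (v + w) - h v) atTop (𝓝 0)) {J : Set ℝ}
    (hJ : MeasurableSet J) (hJ_fin : volume J ≠ ⊤) {η : ℝ} (hη : 0 < η) :
    Tendsto (fun v => volume.real (oscillationSet h J η v)) atTop (𝓝 0) := by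
  have : IsFiniteMeasure (volume.restrict J) := ⟨by simpa using hJ_fin.lt_top⟩
  simpa [oscillationSet, measureReal_restrict_apply' hJ] using
    tendstoInMeasure_iff_measureReal_norm.1
      (tendstoInMeasure_sub_of_forall_tendsto_sub hm hlim (volume.restrict J)) η hη

-- `h (v + z)` cannot be close to both `h v` and `h (v + w)`, so if `h v` and `h (v + w)` were far
-- apart, the two exceptional sets would cover an interval of length one.
theorem abs_sub_lt_of_measureReal_oscillationSet_lt {R η v w : ℝ} (hw : |w| ≤ R)
    (hv : volume.real (oscillationSet h (Icc (-R) (R + 1)) (η / 2) v) < 1 / 2)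
    (hvw : volume.real (oscillationSet h (Icc (-R) (R + 1)) (η / 2) (v + w)) < 1 / 2) :
    |h (v + w) - h v| < η := by
  obtain ⟨hRw, hwR⟩ := abs_le.1 hw
  set B := oscillationSet h (Icc (-R) (R + 1)) (η / 2)
  by_contra! hfar
  have cover : Icc w (w + 1) ⊆ B v ∪ (· + -w) ⁻¹' B (v + w) := by
    intro z hz
    have hzJ : z ∈ Icc (-R) (R + 1) := ⟨by linarith [hz.1], by linarith [hz.2]⟩
    rcases le_or_gt (η / 2) |h (v + z) - h v| with hzv | hzv
    · exact .inl ⟨hzv, hzJ⟩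
    · refine .inr ⟨?_, by linarith [hz.1, abs_nonneg w], by linarith [hz.2, abs_nonneg w]⟩
      have htri := abs_sub_le (h (v + w)) (h (v + z)) (h v)
      rw [abs_sub_comm (h (v + w)) (h (v + z))] at htri
      simp only [mem_ofPred_eq, show v + w + (z + -w) = v + z by ring]
      linarith
  have finite (u : ℝ) : volume (B u) ≠ ⊤ :=
    measure_ne_top_of_subset inter_subset_right measure_Icc_lt_top.ne
  have shift : volume ((· + -w) ⁻¹' B (v + w)) = volume (B (v + w)) :=
    measure_preimage_add_right volume (-w) _
  have : (1 : ℝ) ≤ volume.real (B v) + volume.real (B (v + w)) := calc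
    (1 : ℝ) = volume.real (Icc w (w + 1)) := by simp
    _ ≤ volume.real (B v ∪ (· + -w) ⁻¹' B (v + w)) :=
      measureReal_mono cover (measure_union_ne_top (finite v) (shift ▸ finite _))
    _ ≤ volume.real (B v) + volume.real ((· + -w) ⁻¹' B (v + w)) := measureReal_union_le _ _
    _ = volume.real (B v) + volume.real (B (v + w)) := by simp only [measureReal_def, shift]
  linarith

/-- Karamata's uniform convergence theorem, in additive form. -/
theorem tendstoUniformlyOn_sub_of_forall_tendsto_sub (hm : Measurable h)
    (hlim : ∀ w, Tendsto (fun v => h (v + w) - h v) atTop (𝓝 0))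
    {K : Set ℝ} (hK : Bornology.IsBounded K) :
    TendstoUniformlyOn (fun v w => h (v + w) - h v) 0 atTop K := by
  obtain ⟨R, -, hKR⟩ := hK.subset_closedBall_lt 0 0
  rw [Metric.tendstoUniformlyOn_iff]
  intro η hη
  obtain ⟨v₀, hv₀⟩ := eventually_atTop.1 <| (tendsto_measureReal_oscillationSet hm hlim
    measurableSet_Icc (measure_Icc_lt_top (a := -R) (b := R + 1)).ne
      (half_pos hη)).eventually_lt_const one_half_pos
  filter_upwards [eventually_ge_atTop (v₀ + R)] with v hv w hw
  have hwR : |w| ≤ R := by simpa using hKR hw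
  have hR : 0 ≤ R := (abs_nonneg w).trans hwR
  rw [Pi.zero_apply, dist_zero_left, Real.norm_eq_abs]
  linarith [abs_sub_lt_of_measureReal_oscillationSet_lt hwR (hv₀ v (by linarith))
    (hv₀ (v + w) (by linarith [neg_le_of_abs_le hwR]))]

theorem eventually_abs_sub_le_of_forall_tendsto_sub (hm : Measurable h)
    (hlim : ∀ w, Tendsto (fun v => h (v + w) - h v) atTop (𝓝 0)) {η : ℝ} (hη : 0 < η) :
    ∀ᶠ v in atTop, ∀ w ≥ 0, |h (v + w) - h v| ≤ η * (1 + w) := by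
  have unit_step : ∀ᶠ v in atTop, ∀ w ∈ Icc (0 : ℝ) 1, dist (h v) (h (v + w)) ≤ η := by
    filter_upwards [Metric.tendstoUniformlyOn_iff.1 (tendstoUniformlyOn_sub_of_forall_tendsto_sub
      hm hlim (Metric.isBounded_Icc 0 1)) η hη] with v hv w hw
    simpa [Real.dist_eq, abs_sub_comm] using (hv w hw).le
  filter_upwards [eventually_forall_ge_atTop.2 unit_step] with v hv w hw
  let n := ⌊w⌋₊ + 1
  have hn : (0 : ℝ) < n := by positivity
  have hwn : w ≤ n := by simpa [n] using (Nat.lt_floor_add_one w).le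
  have hnw : (n : ℝ) ≤ 1 + w := by simpa [n, add_comm] using Nat.floor_le hw
  have telescope := dist_le_range_sum_of_dist_le (f := fun k : ℕ => h (v + k * (w / n))) n
    (d := fun _ => η) fun {k} _ => by
      have := hv (v + k * (w / n)) (le_add_of_nonneg_right (by positivity)) (w / n)
        ⟨by positivity, (div_le_one hn).2 hwn⟩
      rwa [add_assoc, ← add_one_mul, ← Nat.cast_succ] at this
  calc |h (v + w) - h v| ≤ n * η := by
        simpa [dist_comm, Real.dist_eq, abs_sub_comm, mul_div_cancel₀ w hn.ne'] using telescope
    _ ≤ η * (1 + w) := by rw [mul_comm]; gcongr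

end UniformConvergence

/-- Regular variation at `∞` with index `ρ`. No sign is imposed on `f`; the condition itself forces
`f` to be eventually nonzero. -/
def IsRegularlyVarying (f : ℝ → ℝ) (ρ : ℝ) : Prop :=
  ∀ x > 0, Tendsto (fun t => f (t * x) / f t) atTop (𝓝 (x ^ ρ))

theorem mem_Icc_mul_rpow_of_abs_log_sub_le {q s ρ δ : ℝ} (hq : 0 < q) (hs : 1 ≤ s) (hδ : 0 < δ)
    (h : |log q - ρ * log s| ≤ log (1 + δ) * (1 + log s)) :
    q ∈ Icc ((1 - δ) * s ^ (ρ - δ)) ((1 + δ) * s ^ (ρ + δ)) := by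
  have hs₀ : 0 < s := by linarith
  have hδ₁ : 0 < 1 + δ := by linarith
  have hlog : log (1 + δ) * log s ≤ δ * log s :=
    mul_le_mul_of_nonneg_right (by linarith [log_le_sub_one_of_pos hδ₁]) (log_nonneg hs)
  obtain ⟨hlo, hhi⟩ := abs_le.1 h
  constructor
  · calc (1 - δ) * s ^ (ρ - δ) ≤ (1 + δ)⁻¹ * s ^ (ρ - δ) := by
          gcongr
          rw [← one_div, le_div_iff₀ hδ₁]
          nlinarith
      _ = exp (-log (1 + δ) + log s * (ρ - δ)) := by
          rw [exp_add, exp_neg, exp_log hδ₁, ← rpow_def_of_pos hs₀]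
      _ ≤ q := by rw [← le_log_iff_exp_le hq]; linarith
  · calc q ≤ exp (log (1 + δ) + log s * (ρ + δ)) := by rw [← log_le_iff_le_exp hq]; linarith
      _ = (1 + δ) * s ^ (ρ + δ) := by rw [exp_add, exp_log hδ₁, ← rpow_def_of_pos hs₀]

namespace IsRegularlyVarying

variable {f g : ℝ → ℝ} {ρ : ℝ}

theorem congr' (hf : IsRegularlyVarying f ρ) (hfg : f =ᶠ[atTop] g) : IsRegularlyVarying g ρ := by
  intro x hx
  refine (hf x hx).congr' ?_
  filter_upwards [hfg, (tendsto_id.atTop_mul_const hx).eventually hfg] with t ht htx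
  rw [← ht, ← show f (t * x) = g (t * x) from htx]

theorem eventually_ne_zero (hf : IsRegularlyVarying f ρ) : ∀ᶠ t in atTop, f t ≠ 0 := by
  filter_upwards [(hf 1 one_pos).eventually_ne (by simp : (1 : ℝ) ^ ρ ≠ 0)] with t ht
  exact (div_ne_zero_iff.1 ht).2

theorem tendsto_log_exp_sub (hf : IsRegularlyVarying f ρ) (w : ℝ) :
    Tendsto (fun v => (log (f (exp (v + w))) - ρ * (v + w)) - (log (f (exp v)) - ρ * v))
      atTop (𝓝 0) := by
  have hlim := (((hf (exp w) (exp_pos w)).comp tendsto_exp_atTop).log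
    (rpow_pos_of_pos (exp_pos w) ρ).ne').sub_const (ρ * w)
  rw [log_rpow (exp_pos w), log_exp, sub_self] at hlim
  have hne := tendsto_exp_atTop.eventually hf.eventually_ne_zero
  refine hlim.congr' ?_
  filter_upwards [hne, (tendsto_atTop_add_const_right atTop w tendsto_id).eventually hne]
    with v hv hvw
  simp only [Function.comp_apply, id_eq, ← exp_add] at hvw ⊢
  rw [log_div hvw hv]
  ring

theorem eventually_abs_log_div_sub_le (hf : IsRegularlyVarying f ρ) (hm : Measurable f) {η : ℝ}
    (hη : 0 < η) :
    ∀ᶠ t in atTop, ∀ s ≥ 1, |log (f (t * s) / f t) - ρ * log s| ≤ η * (1 + log s) := by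
  have hadd := eventually_abs_sub_le_of_forall_tendsto_sub
    (h := fun v => log (f (exp v)) - ρ * v) (by fun_prop) hf.tendsto_log_exp_sub hη
  filter_upwards [tendsto_log_atTop.eventually hadd,
    eventually_forall_ge_atTop.2 hf.eventually_ne_zero, eventually_gt_atTop 0]
    with t ht hne ht₀ s hs
  have hs₀ : 0 < s := by linarith
  convert ht (log s) (log_nonneg hs) using 2
  rw [← log_mul ht₀.ne' hs₀.ne', exp_log ht₀, exp_log (by positivity), log_mul ht₀.ne' hs₀.ne',
    log_div (hne _ (le_mul_of_one_le_right ht₀.le hs)) (hne t le_rfl)]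
  ring

theorem eventually_abs_div_mem_Icc (hf : IsRegularlyVarying f ρ) (hm : Measurable f) {δ : ℝ}
    (hδ : 0 < δ) :
    ∀ᶠ t in atTop, ∀ s ≥ 1,
      |f (t * s) / f t| ∈ Icc ((1 - δ) * s ^ (ρ - δ)) ((1 + δ) * s ^ (ρ + δ)) := by
  filter_upwards [hf.eventually_abs_log_div_sub_le hm (log_pos (by linarith : 1 < 1 + δ)),
    eventually_forall_ge_atTop.2 hf.eventually_ne_zero, eventually_gt_atTop 0]
    with t ht hne ht₀ s hs
  have hts := hne _ (le_mul_of_one_le_right ht₀.le hs)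
  refine mem_Icc_mul_rpow_of_abs_log_sub_le (abs_pos.2 (div_ne_zero hts (hne t le_rfl))) hs hδ ?_
  simpa only [log_abs] using ht s hs

theorem eventually_div_mem_Icc_of_abs (hf : IsRegularlyVarying (fun t => |f t|) ρ)
    (hm : ∃ g, Measurable g ∧ f =ᶠ[atTop] g)
    (hsign : (∀ᶠ t in atTop, 0 < f t) ∨ ∀ᶠ t in atTop, f t < 0) {δ : ℝ} (hδ : 0 < δ) :
    ∀ᶠ t in atTop, ∀ s ≥ 1,
      f (t * s) / f t ∈ Icc ((1 - δ) * s ^ (ρ - δ)) ((1 + δ) * s ^ (ρ + δ)) := by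
  obtain ⟨g, hg, hfg⟩ := hm
  have hpos : ∀ᶠ t in atTop, ∀ y ≥ t, 0 < f y / f t := by
    rcases hsign with h | h <;> filter_upwards [eventually_forall_ge_atTop.2 h] with t ht y hy
    · exact div_pos (ht y hy) (ht t le_rfl)
    · exact div_pos_of_neg_of_neg (ht y hy) (ht t le_rfl)
  filter_upwards [(hf.congr' (hfg.fun_comp abs)).eventually_abs_div_mem_Icc hg.abs hδ,
    eventually_forall_ge_atTop.2 hfg, hpos, eventually_gt_atTop 0] with t ht heq hpos ht₀ s hs
  have hts : t ≤ t * s := le_mul_of_one_le_right ht₀.le hs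
  have := ht s hs
  simp only [Function.comp_apply] at this
  rwa [← heq _ hts, ← heq t le_rfl, ← abs_div, abs_abs, abs_of_pos (hpos _ hts)] at this

end IsRegularlyVarying

section Integration

theorem sub_mem_Icc_mul_integral {g g' k : ℝ → ℝ} {a b c C : ℝ} (hab : a ≤ b)
    (hg : ∀ u ∈ Icc a b, HasDerivAt g (g' u) u) (hk : ContinuousOn k (Icc a b))
    (hbound : ∀ u ∈ Icc a b, g' u ∈ Icc (c * k u) (C * k u)) :
    g b - g a ∈ Icc (c * ∫ u in a..b, k u) (C * ∫ u in a..b, k u) := by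
  have hcont : ContinuousOn g (Icc a b) := fun u hu => (hg u hu).continuousAt.continuousWithinAt
  have hderiv (u : ℝ) (hu : u ∈ Ioo a b) : HasDerivWithinAt g (g' u) (Ioi u) u :=
    (hg u (Ioo_subset_Icc_self hu)).hasDerivWithinAt
  have hint (m : ℝ) : IntegrableOn (fun u => m * k u) (Icc a b) :=
    (continuousOn_const.mul hk).integrableOn_Icc
  simp only [← intervalIntegral.integral_const_mul]
  exact ⟨intervalIntegral.integral_le_sub_of_hasDeriv_right_of_le hab hcont hderiv (hint c)
      fun u hu => (hbound u (Ioo_subset_Icc_self hu)).1,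
    intervalIntegral.sub_le_integral_of_hasDeriv_right_of_le hab hcont hderiv (hint C)
      fun u hu => (hbound u (Ioo_subset_Icc_self hu)).2⟩

theorem continuousOn_rpow_const_Ioi (r : ℝ) : ContinuousOn (fun s : ℝ => s ^ r) (Ioi 0) :=
  fun s hs => (continuousAt_rpow_const s r (.inl (ne_of_gt hs))).continuousWithinAt

theorem hasDerivAt_integral_rpow (r : ℝ) {u : ℝ} (hu : 0 < u) :
    HasDerivAt (fun u => ∫ s in (1 : ℝ)..u, s ^ r) (u ^ r) u := by
  have hcont := continuousOn_rpow_const_Ioi r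
  have hsub : uIcc 1 u ⊆ Ioi 0 := fun s hs => (lt_min one_pos hu).trans_le hs.1
  exact intervalIntegral.integral_hasDerivAt_right (hcont.mono hsub).intervalIntegrable
    (hcont.stronglyMeasurableAtFilter isOpen_Ioi u hu) (hcont.continuousAt (Ioi_mem_nhds hu))

variable {V α : ℝ → ℝ} {x δ a c C γ ρ : ℝ}

theorem mem_Icc_rpow_of_hasDerivAt_mul_div
    (hV : ∀ u ∈ Icc 1 x, HasDerivAt V (V u * (α u / u)) u) (hV₁ : V 1 = 1)
    (hpos : ∀ u ∈ Icc 1 x, 0 < V u) (hα : ∀ u ∈ Icc 1 x, |α u| ≤ δ) :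
    ∀ u ∈ Icc 1 x, V u ∈ Icc (u ^ (-δ)) (u ^ δ) := by
  intro u hu
  have hlogV (u : ℝ) (hu : u ∈ Icc 1 x) : HasDerivAt (fun u => log (V u)) (α u / u) u := by
    simpa [mul_div_cancel_left₀ _ (hpos u hu).ne'] using (hV u hu).log (hpos u hu).ne'
  have hlog (u : ℝ) (hu : u ∈ Icc 1 x) : HasDerivAt (fun u => δ * log u) (δ * u⁻¹) u :=
    (hasDerivAt_log (by linarith [hu.1])).const_mul δ
  have habs : |log (V u)| ≤ δ * log u := by
    refine image_norm_le_of_norm_deriv_right_le_deriv_boundary'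
      (fun u hu => (hlogV u hu).continuousAt.continuousWithinAt)
      (fun u hu => (hlogV u (Ico_subset_Icc_self hu)).hasDerivWithinAt) (by simp [hV₁])
      (fun u hu => (hlog u hu).continuousAt.continuousWithinAt)
      (fun u hu => (hlog u (Ico_subset_Icc_self hu)).hasDerivWithinAt) (fun u hu => ?_) hu
    have hu₀ : 0 < u := by linarith [hu.1]
    rw [Real.norm_eq_abs, abs_div, abs_of_pos hu₀, div_eq_mul_inv]
    gcongr
    exact hα u (Ico_subset_Icc_self hu)
  obtain ⟨hlo, hhi⟩ := abs_le.1 habs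
  have hu₀ : 0 < u := by linarith [hu.1]
  rw [rpow_def_of_pos hu₀, rpow_def_of_pos hu₀, mem_Icc, ← le_log_iff_exp_le (hpos u hu),
    ← log_le_iff_le_exp (hpos u hu)]
  constructor <;> linarith

theorem mul_mem_Icc_mul_rpow {v q u : ℝ} (hu : u ∈ Icc 1 x) (hδ : 0 ≤ δ) (hc : 0 ≤ c)
    (hC : 0 ≤ C) (hv : v ∈ Icc (u ^ (-δ)) (u ^ δ))
    (hq : q ∈ Icc (c * u ^ (ρ - δ)) (C * u ^ (ρ + δ))) :
    v * (q / u) ∈ Icc (c * x ^ (-(2 * δ)) * u ^ (ρ - 1)) (C * x ^ (2 * δ) * u ^ (ρ - 1)) := by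
  have hu₀ : 0 < u := by linarith [hu.1]
  have hq₀ : 0 ≤ q := le_trans (by positivity) hq.1
  have hv₀ : 0 ≤ v := le_trans (by positivity) hv.1
  have hsplit (r : ℝ) : u ^ r * (u ^ (ρ + r) / u) = u ^ (2 * r) * u ^ (ρ - 1) := by
    rw [← rpow_sub_one hu₀.ne', ← rpow_add hu₀, ← rpow_add hu₀]
    ring_nf
  constructor
  · calc c * x ^ (-(2 * δ)) * u ^ (ρ - 1) ≤ c * u ^ (-(2 * δ)) * u ^ (ρ - 1) := by
          gcongr ?_ * _
          exact mul_le_mul_of_nonneg_left (rpow_le_rpow_of_nonpos hu₀ hu.2 (by linarith)) hc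
      _ = c * (u ^ (2 * -δ) * u ^ (ρ - 1)) := by ring_nf
      _ = u ^ (-δ) * (c * u ^ (ρ - δ) / u) := by rw [← hsplit]; ring_nf
      _ ≤ v * (q / u) := by gcongr; exacts [hv.1, hq.1]
  · calc v * (q / u) ≤ u ^ δ * (C * u ^ (ρ + δ) / u) := by gcongr; exacts [hv.2, hq.2]
      _ = C * (u ^ (2 * δ) * u ^ (ρ - 1)) := by rw [← hsplit]; ring
      _ = C * u ^ (2 * δ) * u ^ (ρ - 1) := by ring
      _ ≤ C * x ^ (2 * δ) * u ^ (ρ - 1) := by gcongr; exact hu.2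

theorem sub_one_div_mem_Icc_mul_integral_rpow (hδ : 0 ≤ δ) (hc : 0 ≤ c) (hC : 0 ≤ C)
    (hV : ∀ u ∈ Icc 1 x, HasDerivAt V (V u * (α u / u)) u) (hV₁ : V 1 = 1)
    (hpow : ∀ u ∈ Icc 1 x, V u ∈ Icc (u ^ (-δ)) (u ^ δ))
    (hratio : ∀ u ∈ Icc 1 x, α u / a ∈ Icc (c * u ^ (ρ - δ)) (C * u ^ (ρ + δ))) :
    ∀ u ∈ Icc 1 x, (V u - 1) / a ∈ Icc (c * x ^ (-(2 * δ)) * ∫ s in (1 : ℝ)..u, s ^ (ρ - 1))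
      (C * x ^ (2 * δ) * ∫ s in (1 : ℝ)..u, s ^ (ρ - 1)) := by
  intro u hu
  have hsub : Icc 1 u ⊆ Icc 1 x := Icc_subset_Icc_right hu.2
  have := sub_mem_Icc_mul_integral (g := fun s => V s / a) hu.1
    (fun s hs => (hV s (hsub hs)).div_const a)
    ((continuousOn_rpow_const_Ioi (ρ - 1)).mono fun s hs => one_pos.trans_le hs.1)
    (fun s hs => by
      rw [show V s * (α s / s) / a = V s * (α s / a / s) by ring]
      exact mul_mem_Icc_mul_rpow (hsub hs) hδ hc hC (hpow s (hsub hs)) (hratio s (hsub hs)))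
  rwa [hV₁, ← sub_div] at this

theorem sub_integral_rpow_div_mem_Icc_mul_Kfun {φ : ℝ → ℝ} (hx : 1 ≤ x)
    (hφ : ∀ u ∈ Icc 1 x, HasDerivAt φ (u ^ (γ - 1) * V u) u)
    (hV : ∀ u ∈ Icc 1 x, (V u - 1) / a ∈
      Icc (c * ∫ s in (1 : ℝ)..u, s ^ (ρ - 1)) (C * ∫ s in (1 : ℝ)..u, s ^ (ρ - 1))) :
    (φ x - φ 1 - ∫ u in (1 : ℝ)..x, u ^ (γ - 1)) / a ∈
      Icc (c * Kfun γ ρ x) (C * Kfun γ ρ x) := by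
  have hpos (u : ℝ) (hu : u ∈ Icc 1 x) : 0 < u := one_pos.trans_le hu.1
  have := sub_mem_Icc_mul_integral
    (g := fun y => (φ y - ∫ u in (1 : ℝ)..y, u ^ (γ - 1)) / a)
    (k := fun u => u ^ (γ - 1) * ∫ s in (1 : ℝ)..u, s ^ (ρ - 1)) (c := c) (C := C) hx
    (fun u hu => ((hφ u hu).sub (hasDerivAt_integral_rpow (γ - 1) (hpos u hu))).div_const a)
    (((continuousOn_rpow_const_Ioi (γ - 1)).mono hpos).mul fun u hu =>
      (hasDerivAt_integral_rpow (ρ - 1) (hpos u hu)).continuousAt.continuousWithinAt)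
    (fun u hu => by
      have hw : 0 ≤ u ^ (γ - 1) := rpow_nonneg (hpos u hu).le _
      rw [show (u ^ (γ - 1) * V u - u ^ (γ - 1)) / a = u ^ (γ - 1) * ((V u - 1) / a) by ring,
        mul_left_comm, mul_left_comm C]
      exact ⟨mul_le_mul_of_nonneg_left (hV u hu).1 hw, mul_le_mul_of_nonneg_left (hV u hu).2 hw⟩)
  convert! this using 1
  rw [intervalIntegral.integral_same]
  ring

end Integration

section TailQuantile

variable {U U' U'' A : ℝ → ℝ} {γ ρ : ℝ}

/-- The slope of `U` at `tu` relative to its slope at `t`, divided by the power `u^{γ-1}` that it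
approaches as `t → ∞`. The function `U'` is the derivative of `U`. -/
def relSlope (U' : ℝ → ℝ) (γ t u : ℝ) : ℝ :=
  u ^ (1 - γ) * (U' (t * u) / U' t)

theorem hasDerivAt_relSlope {t u : ℝ} (hu : 0 < u) (hU'' : HasDerivAt U' (U'' (t * u)) (t * u))
    (hA : A (t * u) = t * u * U'' (t * u) / U' (t * u) + 1 - γ) (hne : U' (t * u) ≠ 0) :
    HasDerivAt (relSlope U' γ t) (relSlope U' γ t u * (A (t * u) / u)) u := by
  have hscale : HasDerivAt (fun u => U' (t * u)) (U'' (t * u) * t) u :=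
    hU''.comp u (by simpa using (hasDerivAt_id u).const_mul t)
  refine ((hasDerivAt_rpow_const (p := 1 - γ) (.inl hu.ne')).mul
    (hscale.div_const (U' t))).congr_deriv ?_
  rw [hA, relSlope, rpow_sub_one hu.ne']
  generalize U' (t * u) = p at hne ⊢
  field_simp
  ring

theorem hasDerivAt_div_mul_deriv {t u : ℝ} (ht : t ≠ 0) (hu : 0 < u)
    (hU' : HasDerivAt U (U' (t * u)) (t * u)) :
    HasDerivAt (fun u => U (t * u) / (t * U' t)) (u ^ (γ - 1) * relSlope U' γ t u) u := by
  have hscale : HasDerivAt (fun u => U (t * u)) (U' (t * u) * t) u :=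
    hU'.comp u (by simpa using (hasDerivAt_id u).const_mul t)
  refine (hscale.div_const (t * U' t)).congr_deriv ?_
  rw [relSlope, ← mul_assoc, ← rpow_add hu, sub_add_sub_cancel', sub_self, rpow_zero, one_mul,
    mul_comm (U' (t * u)), mul_div_mul_left _ _ ht]

theorem excess_div_mem_Icc_mul_Kfun {t x δ c C : ℝ} (ht : 0 < t) (hx : 1 ≤ x) (hδ : 0 ≤ δ)
    (hc : 0 ≤ c) (hC : 0 ≤ C) (hU' : ∀ s ≥ t, HasDerivAt U (U' s) s)
    (hU'' : ∀ s ≥ t, HasDerivAt U' (U'' s) s)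
    (hA : ∀ s ≥ t, A s = s * U'' s / U' s + 1 - γ) (hpos : ∀ s ≥ t, 0 < U' s / U' t)
    (hsmall : ∀ s ≥ t, |A s| ≤ δ)
    (hratio : ∀ s ≥ 1, A (t * s) / A t ∈ Icc (c * s ^ (ρ - δ)) (C * s ^ (ρ + δ))) :
    ((U (t * x) - U t) / (t * U' t) - ∫ u in (1 : ℝ)..x, u ^ (γ - 1)) / A t ∈
      Icc (c * x ^ (-(2 * δ)) * Kfun γ ρ x) (C * x ^ (2 * δ) * Kfun γ ρ x) := by
  have hge (u : ℝ) (hu : u ∈ Icc 1 x) : t * u ≥ t := le_mul_of_one_le_right ht.le hu.1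
  have hu₀ (u : ℝ) (hu : u ∈ Icc 1 x) : 0 < u := one_pos.trans_le hu.1
  have hV₁ : relSlope U' γ t 1 = 1 := by
    simp [relSlope, div_self (div_ne_zero_iff.1 (hpos t le_rfl).ne').2]
  have hV (u : ℝ) (hu : u ∈ Icc 1 x) :
      HasDerivAt (relSlope U' γ t) (relSlope U' γ t u * (A (t * u) / u)) u :=
    hasDerivAt_relSlope (hu₀ u hu) (hU'' _ (hge u hu)) (hA _ (hge u hu))
      (div_ne_zero_iff.1 (hpos _ (hge u hu)).ne').1
  have hpow := mem_Icc_rpow_of_hasDerivAt_mul_div hV hV₁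
    (fun u hu => mul_pos (rpow_pos_of_pos (hu₀ u hu) _) (hpos _ (hge u hu)))
    (fun u hu => hsmall _ (hge u hu))
  have hsub := sub_one_div_mem_Icc_mul_integral_rpow hδ hc hC hV hV₁ hpow
    fun u hu => hratio u hu.1
  have := sub_integral_rpow_div_mem_Icc_mul_Kfun hx
    (fun u hu => hasDerivAt_div_mul_deriv ht.ne' (hu₀ u hu) (hU' _ (hge u hu))) hsub
  rwa [mul_one, ← sub_div] at this

theorem exists_measurable_eventuallyEq_index (hU' : ∀ᶠ t in atTop, HasDerivAt U (U' t) t)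
    (hU'' : ∀ᶠ t in atTop, HasDerivAt U' (U'' t) t)
    (hA : ∀ᶠ t in atTop, A t = t * U'' t / U' t + 1 - γ) :
    ∃ a, Measurable a ∧ A =ᶠ[atTop] a := by
  refine ⟨fun t => t * deriv U' t / deriv U t + 1 - γ, ?_, ?_⟩
  · have := measurable_deriv U
    have := measurable_deriv U'
    fun_prop
  · filter_upwards [hU', hU'', hA] with t hd₁ hd₂ hAt
    rw [hd₁.deriv, hd₂.deriv, hAt]

theorem eventually_deriv_ne_zero (hA : ∀ᶠ t in atTop, A t = t * U'' t / U' t + 1 - γ)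
    (hlim : Tendsto A atTop (𝓝 0)) (hne : ∀ᶠ t in atTop, A t ≠ 0) :
    ∀ᶠ t in atTop, U' t ≠ 0 := by
  have hne' : ∀ᶠ t in atTop, A t ≠ 1 - γ := by
    by_cases hγ : 1 - γ = 0
    · simpa only [hγ] using hne
    · exact hlim.eventually_ne (Ne.symm hγ)
  filter_upwards [hA, hne'] with t hAt ht hzero
  -- With `x / 0 = 0`, `A t = 1 - γ` wherever `U' t = 0`.
  exact ht (by rw [hAt, hzero]; simp)

theorem eventually_forall_ge_deriv_div_pos (hU' : ∀ᶠ t in atTop, HasDerivAt U (U' t) t)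
    (hne : ∀ᶠ t in atTop, U' t ≠ 0) : ∀ᶠ t in atTop, ∀ s ≥ t, 0 < U' s / U' t := by
  filter_upwards [eventually_forall_ge_atTop.2 hU', eventually_forall_ge_atTop.2 hne]
    with t hderiv hne s hs
  -- A derivative has the intermediate value property, so it cannot change sign without vanishing.
  rcases hasDerivWithinAt_forall_lt_or_forall_gt_of_forall_ne (convex_Ici t)
    (fun s hs => (hderiv s hs).hasDerivWithinAt) hne with hneg | hpos
  · exact div_pos_of_neg_of_neg (hneg s hs) (hneg t self_mem_Ici)
  · exact div_pos (hpos s hs) (hpos t self_mem_Ici)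

theorem potter_type_bounds_general (hU' : ∀ᶠ t in atTop, HasDerivAt U (U' t) t)
    (hU'' : ∀ᶠ t in atTop, HasDerivAt U' (U'' t) t)
    (hA : ∀ᶠ t in atTop, A t = t * U'' t / U' t + 1 - γ) (hlim : Tendsto A atTop (𝓝 0))
    (hsign : (∀ᶠ t in atTop, 0 < A t) ∨ ∀ᶠ t in atTop, A t < 0)
    (hRV : IsRegularlyVarying (fun t => |A t|) ρ) {ε : ℝ} (hε : 0 < ε) :
    ∀ᶠ t in atTop, ∀ x ≥ 1,
      ((U (t * x) - U t) / (t * U' t) - ∫ u in (1 : ℝ)..x, u ^ (γ - 1)) / A t ∈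
        Icc ((1 - ε) * x ^ (-ε) * Kfun γ ρ x) ((1 + ε) * x ^ ε * Kfun γ ρ x) := by
  obtain ⟨δ, hδ, hδε, hδ₁⟩ : ∃ δ > 0, 2 * δ ≤ ε ∧ δ ≤ 1 :=
    ⟨min (ε / 2) 1, by positivity, by linarith [min_le_left (ε / 2) 1], min_le_right _ _⟩
  have hne := eventually_deriv_ne_zero hA hlim (hRV.eventually_ne_zero.mono fun _ => abs_ne_zero.1)
  have hsmall : ∀ᶠ t in atTop, |A t| ≤ δ := hlim.abs.eventually_le_const (by simpa using hδ)
  filter_upwards [eventually_gt_atTop 0, eventually_forall_ge_atTop.2 hU',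
    eventually_forall_ge_atTop.2 hU'', eventually_forall_ge_atTop.2 hA,
    eventually_forall_ge_deriv_div_pos hU' hne, eventually_forall_ge_atTop.2 hsmall,
    hRV.eventually_div_mem_Icc_of_abs (exists_measurable_eventuallyEq_index hU' hU'' hA) hsign hδ]
    with t ht hU' hU'' hA hpos hsmall hratio x hx
  have hK : 0 ≤ Kfun γ ρ x := intervalIntegral.integral_nonneg hx fun u hu =>
    mul_nonneg (rpow_nonneg (by linarith [hu.1]) _)
      (intervalIntegral.integral_nonneg hu.1 fun s hs => rpow_nonneg (by linarith [hs.1]) _)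
  refine Icc_subset_Icc ?_ ?_ (excess_div_mem_Icc_mul_Kfun ht hx hδ.le (by linarith) (by linarith)
    hU' hU'' hA hpos hsmall hratio) <;> gcongr <;> linarith

end TailQuantile

/-- Potter-type bounds: for every `ε > 0` there is `t₀` such that for all `t ≥ t₀` and
`x ≥ 1`, `(1−ε) x^{−ε} K_{γ,ρ}(x) ≤ ((U(tx) − U(t))/(t U'(t)) − (x^γ−1)/γ)/A(t)
≤ (1+ε) x^{ε} K_{γ,ρ}(x)`. -/
theorem potter_type_bounds
    (F Ufun U' U'' : ℝ → ℝ) (γ : ℝ) (hγ : 0 < γ)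
    (hUinv : ∀ t > 1, 1 - F (Ufun t) = 1 / t)
    (hU' : ∀ t > 1, HasDerivAt Ufun (U' t) t)
    (hU'' : ∀ t > 1, HasDerivAt U' (U'' t) t)
    (Afun : ℝ → ℝ) (hAdef : ∀ t, Afun t = t * U'' t / U' t + 1 - γ)
    (hC1 : Tendsto Afun atTop (nhds 0))
    (hSign : ∃ T : ℝ, (∀ t ≥ T, 0 < Afun t) ∨ (∀ t ≥ T, Afun t < 0))
    (ρ : ℝ) (hρ : ρ ≤ 0)
    (hRV : ∀ x > 0, Tendsto (fun t => |Afun (t * x)| / |Afun t|) atTop (nhds (x ^ ρ))) :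
    ∀ ε > (0:ℝ), ∃ t₀ : ℝ, ∀ t ≥ t₀, ∀ x ≥ (1:ℝ),
      (1 - ε) * x ^ (-ε) * Kfun γ ρ x ≤
        ((Ufun (t * x) - Ufun t) / (t * U' t) - (x ^ γ - 1) / γ) / Afun t ∧
      ((Ufun (t * x) - Ufun t) / (t * U' t) - (x ^ γ - 1) / γ) / Afun t ≤
        (1 + ε) * x ^ ε * Kfun γ ρ x := by
  intro ε hε
  have hsign : (∀ᶠ t in atTop, 0 < Afun t) ∨ ∀ᶠ t in atTop, Afun t < 0 := by
    simpa only [eventually_atTop, exists_or] using hSign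
  simpa [integral_rpow (.inl (by linarith : -1 < γ - 1))] using eventually_atTop.1
    (potter_type_bounds_general ((eventually_gt_atTop 1).mono hU')
      ((eventually_gt_atTop 1).mono hU'') (.of_forall hAdef) hC1 hsign hRV hε)
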